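/- For ε > 0 define f_ε : ℝ² → ℝ by f_ε(y,t) = 0 if t ≤ 0, f_ε(y,t) = 2yt/(y² + 2ε) if 0 < t ≤ (y² + 2ε)/2, and f_ε(y,t) = y if t > (y² + 2ε)/2, and let f = f_0 be the corresponding function with ε = 0 (f(y,t) = 2t/y on 0 < t ≤ y²/2). Then f_ε is locally Lipschitz on ℝ² for each ε > 0, and f_ε → f in W^{1,p}_loc(ℝ²) as ε → 0⁺ for every p ∈ [1, 3). -/

import Mathlib

/-!
With `D = y ^ 2 + 2 * ε`, the function `Fe ε (y, t)` is `y` times `2 * t / D` clamped to `[0, 1]`.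
For `ε > 0` this is built from smooth functions, `min`, `max` and a product, hence is locally
Lipschitz. For all `ε ≥ 0` it is continuous on every horizontal and every vertical line and
differentiable there off at most two points, so integration by parts on lines
(`integral_by_parts_line`) and Fubini identify its pointwise partial derivatives `GyF ε` and
`GtF ε` as weak derivatives.

At every point of the plane `Fe ε`, `GyF ε` and `GtF ε` converge as `ε → 0⁺` to their values at
`ε = 0` (`tendsto_regimes`), so the convergence in `L ^ p` on compact sets follows by domination.
One has `|Fe ε| ≤ |y|` and `|GyF ε| ≤ 1`. Where `GtF ε` is nonzero, both `y ^ 2` and `2 * t` are at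
most `D`, so `|GtF ε| = 2 * |y| / D ≤ 2 * |y| ^ (2 * b - 1) * (2 * t) ^ (-b)` for every
`b ∈ [0, 1]` (`abs_GtF_le`). The `p`-th power of this product is locally integrable as soon as
`p * (2 * b - 1) > -1` and `p * b < 1`, and such a `b` exists exactly when `p < 3`.
-/

open MeasureTheory Filter

/-- The approximating functions f_ε; for ε = 0 this is the function f of the first example. -/
noncomputable def Fe (ε : ℝ) (p : ℝ × ℝ) : ℝ :=
  if p.2 ≤ 0 then 0
  else if p.2 ≤ (p.1 ^ 2 + 2 * ε) / 2 then 2 * p.1 * p.2 / (p.1 ^ 2 + 2 * ε)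
  else p.1

/-- g is the distributional derivative of f in the direction v, and is locally integrable. -/
def IsWeakDeriv10 (v : ℝ × ℝ) (f g : ℝ × ℝ → ℝ) : Prop :=
  (∀ K : Set (ℝ × ℝ), IsCompact K → IntegrableOn g K) ∧
  ∀ φ : ℝ × ℝ → ℝ, ContDiff ℝ (⊤ : ℕ∞) φ → HasCompactSupport φ →
    ∫ p, f p * fderiv ℝ φ p v = - ∫ p, g p * φ p

/-! ### Pointwise derivatives and bounds -/

/-- The pointwise `y`-derivative of `Fe ε`, off the curves where `Fe ε` has a corner. -/
noncomputable def GyF (ε : ℝ) (p : ℝ × ℝ) : ℝ :=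
  if p.2 ≤ 0 then 0
  else if p.2 ≤ (p.1 ^ 2 + 2 * ε) / 2 then
    2 * p.2 * (2 * ε - p.1 ^ 2) / (p.1 ^ 2 + 2 * ε) ^ 2
  else 1

/-- The pointwise `t`-derivative of `Fe ε`, off the curves where `Fe ε` has a corner. -/
noncomputable def GtF (ε : ℝ) (p : ℝ × ℝ) : ℝ :=
  if p.2 ≤ 0 then 0
  else if p.2 ≤ (p.1 ^ 2 + 2 * ε) / 2 then 2 * p.1 / (p.1 ^ 2 + 2 * ε)
  else 0

lemma measurable_Fe (ε : ℝ) : Measurable (Fe ε) := by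
  unfold Fe
  refine Measurable.ite (measurableSet_le (by fun_prop) (by fun_prop)) (by fun_prop) ?_
  exact Measurable.ite (measurableSet_le (by fun_prop) (by fun_prop)) (by fun_prop) (by fun_prop)

lemma measurable_GyF (ε : ℝ) : Measurable (GyF ε) := by
  unfold GyF
  refine Measurable.ite (measurableSet_le (by fun_prop) (by fun_prop)) (by fun_prop) ?_
  exact Measurable.ite (measurableSet_le (by fun_prop) (by fun_prop)) (by fun_prop) (by fun_prop)

lemma measurable_GtF (ε : ℝ) : Measurable (GtF ε) := by
  unfold GtF
  refine Measurable.ite (measurableSet_le (by fun_prop) (by fun_prop)) (by fun_prop) ?_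
  exact Measurable.ite (measurableSet_le (by fun_prop) (by fun_prop)) (by fun_prop) (by fun_prop)

/-- This also holds where `y ^ 2 + 2 * ε = 0`: there `y = 0`, so the junk value of the quotient
does not matter. -/
lemma Fe_eq_clamp {ε : ℝ} (hε : 0 ≤ ε) (y t : ℝ) :
    Fe ε (y, t) = y * min 1 (max 0 (2 * t / (y ^ 2 + 2 * ε))) := by
  have hD : 0 ≤ y ^ 2 + 2 * ε := by positivity
  unfold Fe
  dsimp only
  rcases hD.eq_or_lt with h0 | hD
  · have hy : y = 0 := by nlinarith [sq_nonneg y]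
    subst hy
    simp
  split_ifs with h1 h2
  · have : 2 * t / (y ^ 2 + 2 * ε) ≤ 0 := div_nonpos_of_nonpos_of_nonneg (by linarith) hD.le
    rw [max_eq_left this]; simp
  · push Not at h1
    have a : 0 ≤ 2 * t / (y ^ 2 + 2 * ε) := by positivity
    have b : 2 * t / (y ^ 2 + 2 * ε) ≤ 1 := by rw [div_le_one hD]; linarith
    rw [max_eq_right a, min_eq_right b]; ring
  · push Not at h1 h2
    have a : 0 ≤ 2 * t / (y ^ 2 + 2 * ε) := by positivity
    have b : 1 ≤ 2 * t / (y ^ 2 + 2 * ε) := by rw [one_le_div hD]; linarith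
    rw [max_eq_right a, min_eq_left b]; ring

/-- For `t > 0` this form has no vanishing denominator, even for `ε = 0`. -/
lemma Fe_eq_of_pos {ε t : ℝ} (ht : 0 < t) (y : ℝ) :
    Fe ε (y, t) = y * (2 * t) / max (2 * t) (y ^ 2 + 2 * ε) := by
  unfold Fe
  dsimp only
  rw [if_neg (by linarith)]
  split_ifs with h2
  · rw [max_eq_right (by linarith)]; ring
  · rw [max_eq_left (by linarith)]; field_simp

lemma locallyLipschitz_Fe {ε : ℝ} (hε : 0 < ε) : LocallyLipschitz (Fe ε) := by
  have hmul : LocallyLipschitz (fun q : ℝ × ℝ => q.1 * q.2) :=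
    (contDiff_fst.mul contDiff_snd : ContDiff ℝ 1 (fun q : ℝ × ℝ => q.1 * q.2)).locallyLipschitz
  have hdiv : LocallyLipschitz (fun q : ℝ × ℝ => 2 * q.2 / (q.1 ^ 2 + 2 * ε)) := by
    apply ContDiff.locallyLipschitz (𝕂 := ℝ)
    refine ContDiff.div (by fun_prop) (by fun_prop) (fun q => by positivity)
  have hfst : LocallyLipschitz (fun q : ℝ × ℝ => q.1) :=
    (contDiff_fst : ContDiff ℝ 1 (fun q : ℝ × ℝ => q.1)).locallyLipschitz
  have := hmul.comp (hfst.prodMk ((hdiv.const_max 0).const_min 1))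
  convert this using 1
  funext ⟨y, t⟩
  exact Fe_eq_clamp hε.le y t

lemma abs_Fe_le {ε : ℝ} (hε : 0 ≤ ε) (q : ℝ × ℝ) : |Fe ε q| ≤ |q.1| := by
  obtain ⟨y, t⟩ := q
  rw [Fe_eq_clamp hε, abs_mul]
  have h0 : 0 ≤ min 1 (max 0 (2 * t / (y ^ 2 + 2 * ε))) := le_min (by norm_num) (le_max_left _ _)
  rw [abs_of_nonneg h0]
  exact mul_le_of_le_one_right (abs_nonneg y) (min_le_left _ _)

lemma abs_GyF_le {ε : ℝ} (hε : 0 ≤ ε) (q : ℝ × ℝ) : |GyF ε q| ≤ 1 := by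
  obtain ⟨y, t⟩ := q
  unfold GyF
  dsimp only
  split_ifs with h1 h2
  · simp
  · push Not at h1
    have hD : 0 < y ^ 2 + 2 * ε := by linarith
    rw [abs_div, abs_mul, abs_of_pos (by linarith : 0 < 2 * t), abs_of_pos (pow_pos hD 2),
      div_le_one (pow_pos hD 2), sq (y ^ 2 + 2 * ε)]
    refine mul_le_mul (by linarith) ?_ (abs_nonneg _) hD.le
    rw [abs_le]
    constructor <;> nlinarith [sq_nonneg y]
  · simp

/-- Interpolating `max (y ^ 2) (2 * t) ≤ y ^ 2 + 2 * ε` geometrically with weights `1 - b` and `b`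
bounds the `t`-derivative, uniformly in `ε`, by a product of powers of `|y|` and `|t|`. -/
lemma abs_GtF_le {ε b : ℝ} (hε : 0 ≤ ε) (hb0 : 0 ≤ b) (hb1 : b ≤ 1) (q : ℝ × ℝ) :
    |GtF ε q| ≤ 2 * (|q.1| ^ (2 * b - 1) * |2 * q.2| ^ (-b)) := by
  obtain ⟨y, t⟩ := q
  have hpos : 0 ≤ 2 * (|y| ^ (2 * b - 1) * |2 * t| ^ (-b)) := by positivity
  unfold GtF
  dsimp only
  split_ifs with h1 h2
  · simpa using hpos
  · push Not at h1
    have hD : 0 < y ^ 2 + 2 * ε := by linarith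
    by_cases hy : y = 0
    · subst hy; simpa using hpos
    have hy' : 0 < |y| := abs_pos.mpr hy
    have ht' : 0 < 2 * t := by linarith
    have key : |y| ^ (2 * (1 - b)) * (2 * t) ^ b ≤ y ^ 2 + 2 * ε := by
      have e1 : |y| ^ (2 * (1 - b)) ≤ (y ^ 2 + 2 * ε) ^ (1 - b) := by
        rw [Real.rpow_mul hy'.le, Real.rpow_two, sq_abs]
        exact Real.rpow_le_rpow (sq_nonneg y) (by linarith) (by linarith)
      have e2 : (2 * t) ^ b ≤ (y ^ 2 + 2 * ε) ^ b :=
        Real.rpow_le_rpow ht'.le (by linarith) hb0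
      calc _ ≤ (y ^ 2 + 2 * ε) ^ (1 - b) * (y ^ 2 + 2 * ε) ^ b :=
            mul_le_mul e1 e2 (by positivity) (by positivity)
        _ = y ^ 2 + 2 * ε := by rw [← Real.rpow_add hD]; simp
    rw [abs_div, abs_mul, abs_of_pos hD, abs_of_pos ht', abs_two, div_le_iff₀ hD]
    have e3 : |y| ^ (2 * b - 1) * (2 * t) ^ (-b) * (|y| ^ (2 * (1 - b)) * (2 * t) ^ b) = |y| := by
      calc _ = (|y| ^ (2 * b - 1) * |y| ^ (2 * (1 - b))) * ((2 * t) ^ (-b) * (2 * t) ^ b) := by ring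
        _ = |y| := by
          rw [← Real.rpow_add hy', ← Real.rpow_add ht']
          rw [show 2 * b - 1 + 2 * (1 - b) = 1 by ring]; simp
    have e4 := mul_le_mul_of_nonneg_left key
      (by positivity : 0 ≤ |y| ^ (2 * b - 1) * (2 * t) ^ (-b))
    rw [e3] at e4
    linarith
  · simpa using hpos

/-! ### Local integrability of the dominating functions -/

lemma intervalIntegrable_abs_rpow {s : ℝ} (hs : -1 < s) (a b : ℝ) :
    IntervalIntegrable (fun x : ℝ => |x| ^ s) volume a b := by
  apply intervalIntegrable_of_even (fun x => by rw [abs_neg])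
  intro x hx
  refine (intervalIntegral.intervalIntegrable_rpow' hs (a := 0) (b := x)).congr ?_
  intro y hy
  rw [Set.uIoc_of_le hx.le] at hy
  simp [abs_of_pos hy.1]

lemma integrableOn_rpow_mul_rpow {s r : ℝ} (hs : -1 < s) (hr : -1 < r) {K : Set (ℝ × ℝ)}
    (hK : IsCompact K) :
    IntegrableOn (fun q : ℝ × ℝ => |q.1| ^ s * |2 * q.2| ^ r) K := by
  obtain ⟨R, hR⟩ := hK.isBounded.subset_closedBall (0 : ℝ × ℝ)
  have one (s : ℝ) (hs : -1 < s) :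
      IntegrableOn (fun x : ℝ => |x| ^ s) (Metric.closedBall 0 R) := by
    rw [Real.closedBall_eq_Icc, integrableOn_Icc_iff_integrableOn_Ioc]
    by_cases h : 0 - R ≤ 0 + R
    · exact (intervalIntegrable_iff_integrableOn_Ioc_of_le h).1
        (intervalIntegrable_abs_rpow hs _ _)
    · rw [Set.Ioc_eq_empty (by linarith)]; exact integrableOn_empty
  have two : IntegrableOn (fun x : ℝ => |2 * x| ^ r) (Metric.closedBall 0 R) := by
    have := (one r hr).const_mul (2 ^ r)
    refine this.congr (Eventually.of_forall fun x => ?_)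
    dsimp only
    rw [abs_mul, abs_two, Real.mul_rpow (by norm_num) (abs_nonneg x)]
  have h := Integrable.mul_prod (one s hs) two
  rw [Measure.prod_restrict, closedBall_prod_same] at h
  exact IntegrableOn.mono_set h hR

lemma integrableOn_of_abs_le {g B : ℝ × ℝ → ℝ} {K : Set (ℝ × ℝ)} (hg : Measurable g)
    (hB : IntegrableOn B K) (h : ∀ q, |g q| ≤ B q) : IntegrableOn g K :=
  Integrable.mono' hB hg.aestronglyMeasurable (Eventually.of_forall h)

lemma integrableOn_Fe {ε : ℝ} (hε : 0 ≤ ε) {K : Set (ℝ × ℝ)} (hK : IsCompact K) :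
    IntegrableOn (Fe ε) K :=
  integrableOn_of_abs_le (measurable_Fe ε)
    ((by fun_prop : Continuous fun q : ℝ × ℝ => |q.1|).continuousOn.integrableOn_compact hK)
    (abs_Fe_le hε)

lemma integrableOn_GyF {ε : ℝ} (hε : 0 ≤ ε) {K : Set (ℝ × ℝ)} (hK : IsCompact K) :
    IntegrableOn (GyF ε) K :=
  integrableOn_of_abs_le (measurable_GyF ε)
    ((by fun_prop : Continuous fun _ : ℝ × ℝ => (1 : ℝ)).continuousOn.integrableOn_compact hK)
    (abs_GyF_le hε)

lemma integrableOn_GtF {ε : ℝ} (hε : 0 ≤ ε) {K : Set (ℝ × ℝ)} (hK : IsCompact K) :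
    IntegrableOn (GtF ε) K :=
  integrableOn_of_abs_le (measurable_GtF ε)
    ((integrableOn_rpow_mul_rpow (by norm_num) (by norm_num) hK).const_mul 2)
    (abs_GtF_le (b := 1 / 2) hε (by norm_num) (by norm_num))

/-! ### Weak derivatives from absolute continuity on lines -/

/-- Integration by parts on a line for a continuous function differentiable off a countable set. -/
lemma integral_by_parts_line {u g φ : ℝ → ℝ} (hu : Continuous u) {S : Set ℝ} (hS : S.Countable)
    (hd : ∀ x ∉ S, HasDerivAt u (g x) x) (hg : LocallyIntegrable g)
    {φ' : ℝ → ℝ} (hφ : ∀ x, HasDerivAt φ (φ' x) x) (hφ' : Continuous φ')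
    (hc : HasCompactSupport φ) :
    ∫ x, u x * φ' x = - ∫ x, g x * φ x := by
  have hφc : Continuous φ := continuous_iff_continuousAt.2 fun x => (hφ x).continuousAt
  have hφ'eq : φ' = deriv φ := funext fun x => (hφ x).deriv.symm
  have hc' : HasCompactSupport φ' := hφ'eq ▸ hc.deriv
  have i1 : Integrable (fun x => u x * φ' x) :=
    (hu.mul hφ').integrable_of_hasCompactSupport hc'.mul_left
  have i2 : Integrable (fun x => g x * φ x) := by
    simpa [smul_eq_mul] using hg.integrable_smul_right_of_hasCompactSupport hφc hc
  have i3 : Integrable (fun x => g x * φ x + u x * φ' x) := i2.add i1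
  obtain ⟨R, hR⟩ := hc.isBounded.subset_closedBall (0 : ℝ)
  obtain ⟨R', hR'⟩ := hc'.isBounded.subset_closedBall (0 : ℝ)
  set M := max (max R R') 0 + 1 with hM
  have hMR : R < M := by
    have := le_max_left R R'; have := le_max_left (max R R') 0; linarith
  have hMR' : R' < M := by
    have := le_max_right R R'; have := le_max_left (max R R') 0; linarith
  have hM0 : 0 < M := by have := le_max_right (max R R') 0; linarith
  have z (x : ℝ) (hx : R < |x|) : φ x = 0 := by
    by_contra h
    have := hR (subset_tsupport φ h)
    rw [mem_closedBall_zero_iff, Real.norm_eq_abs] at this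
    linarith
  have z' (x : ℝ) (hx : R' < |x|) : φ' x = 0 := by
    by_contra h
    have := hR' (subset_tsupport φ' h)
    rw [mem_closedBall_zero_iff, Real.norm_eq_abs] at this
    linarith
  have ftc := MeasureTheory.integral_eq_of_hasDerivAt_off_countable
    (fun x => u x * φ x) (fun x => g x * φ x + u x * φ' x) (a := -M) (b := M) hS
    (hu.mul hφc).continuousOn (fun x hx => (hd x hx.2).mul (hφ x)) i3.intervalIntegrable
  have hz1 : φ M = 0 := z M (by rwa [abs_of_pos hM0])
  have hz2 : φ (-M) = 0 := z (-M) (by rwa [abs_neg, abs_of_pos hM0])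
  rw [hz1, hz2, intervalIntegral.integral_eq_integral_of_support_subset] at ftc
  · rw [integral_add i2 i1] at ftc
    linarith
  · intro x hx
    by_contra hx'
    have : M ≤ |x| := by
      by_contra h
      push Not at h
      rw [abs_lt] at h
      exact hx' ⟨h.1, h.2.le⟩
    exact hx (by dsimp only; rw [z x (by linarith), z' x (by linarith)]; ring)

lemma integrable_mul_test {f φ : ℝ × ℝ → ℝ}
    (hf : ∀ K : Set (ℝ × ℝ), IsCompact K → IntegrableOn f K)
    (hφ : Continuous φ) (hc : HasCompactSupport φ) : Integrable (fun q => f q * φ q) := by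
  have h : LocallyIntegrable f := locallyIntegrable_iff.2 fun K hK => hf K hK
  simpa [smul_eq_mul] using h.integrable_smul_right_of_hasCompactSupport hφ hc

lemma isWeakDeriv_fst {f g : ℝ × ℝ → ℝ}
    (hf : ∀ K : Set (ℝ × ℝ), IsCompact K → IntegrableOn f K)
    (hg : ∀ K : Set (ℝ × ℝ), IsCompact K → IntegrableOn g K)
    (hu : ∀ t, Continuous fun y => f (y, t))
    (hd : ∀ t, ∃ S : Set ℝ, S.Countable ∧
      ∀ y ∉ S, HasDerivAt (fun y => f (y, t)) (g (y, t)) y)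
    (hl : ∀ t, LocallyIntegrable fun y => g (y, t)) :
    IsWeakDeriv10 (1, 0) f g := by
  refine ⟨hg, fun φ hφ hc => ?_⟩
  have hφ' : Continuous fun q => fderiv ℝ φ q (1, 0) :=
    (hφ.continuous_fderiv (by simp)).clm_apply continuous_const
  have i1 := integrable_mul_test hf hφ' (hc.fderiv_apply ℝ (1, 0))
  have i2 := integrable_mul_test hg hφ.continuous hc
  rw [Measure.volume_eq_prod] at i1 i2 ⊢
  rw [integral_prod_symm _ i1, integral_prod_symm _ i2, ← integral_neg]
  congr 1
  funext t
  obtain ⟨S, hS, hd⟩ := hd t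
  refine integral_by_parts_line (hu t) hS hd (hl t) (φ := fun y => φ (y, t)) (fun y => ?_)
    (by fun_prop) (hc.comp_isClosedEmbedding ?_)
  · have h1 : HasDerivAt (fun y : ℝ => (y, t)) ((1 : ℝ), (0 : ℝ)) y :=
      (hasDerivAt_id y).prodMk (hasDerivAt_const y t)
    exact ((hφ.differentiable (by simp)) (y, t)).hasFDerivAt.comp_hasDerivAt y h1
  · exact Function.LeftInverse.isClosedEmbedding (f := Prod.fst) (fun _ => rfl) (by fun_prop)
      (by fun_prop)

lemma isWeakDeriv_snd {f g : ℝ × ℝ → ℝ}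
    (hf : ∀ K : Set (ℝ × ℝ), IsCompact K → IntegrableOn f K)
    (hg : ∀ K : Set (ℝ × ℝ), IsCompact K → IntegrableOn g K)
    (hu : ∀ y, Continuous fun t => f (y, t))
    (hd : ∀ y, ∃ S : Set ℝ, S.Countable ∧
      ∀ t ∉ S, HasDerivAt (fun t => f (y, t)) (g (y, t)) t)
    (hl : ∀ y, LocallyIntegrable fun t => g (y, t)) :
    IsWeakDeriv10 (0, 1) f g := by
  refine ⟨hg, fun φ hφ hc => ?_⟩
  have hφ' : Continuous fun q => fderiv ℝ φ q (0, 1) :=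
    (hφ.continuous_fderiv (by simp)).clm_apply continuous_const
  have i1 := integrable_mul_test hf hφ' (hc.fderiv_apply ℝ (0, 1))
  have i2 := integrable_mul_test hg hφ.continuous hc
  rw [Measure.volume_eq_prod] at i1 i2 ⊢
  rw [integral_prod _ i1, integral_prod _ i2, ← integral_neg]
  congr 1
  funext y
  obtain ⟨S, hS, hd⟩ := hd y
  refine integral_by_parts_line (hu y) hS hd (hl y) (φ := fun t => φ (y, t)) (fun t => ?_)
    (by fun_prop) (hc.comp_isClosedEmbedding ?_)
  · have h1 : HasDerivAt (fun t : ℝ => (y, t)) ((0 : ℝ), (1 : ℝ)) t :=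
      (hasDerivAt_const t y).prodMk (hasDerivAt_id t)
    exact ((hφ.differentiable (by simp)) (y, t)).hasFDerivAt.comp_hasDerivAt t h1
  · exact Function.LeftInverse.isClosedEmbedding (f := Prod.snd) (fun _ => rfl) (by fun_prop)
      (by fun_prop)

lemma locallyIntegrable_of_abs_le_const {g : ℝ → ℝ} (hg : Measurable g) {C : ℝ}
    (h : ∀ x, |g x| ≤ C) : LocallyIntegrable g :=
  (locallyIntegrable_const C).mono hg.aestronglyMeasurable
    (Eventually.of_forall fun x => (h x).trans (le_abs_self C))

lemma isWeakDeriv_GyF {ε : ℝ} (hε : 0 ≤ ε) : IsWeakDeriv10 (1, 0) (Fe ε) (GyF ε) := by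
  refine isWeakDeriv_fst (fun K hK => integrableOn_Fe hε hK) (fun K hK => integrableOn_GyF hε hK)
    (fun t => ?_) (fun t => ?_) (fun t => ?_)
  · rcases le_or_gt t 0 with ht | ht
    · simp only [Fe, if_pos ht]
      exact continuous_const
    · simp only [Fe_eq_of_pos ht]
      refine Continuous.div (by fun_prop) (by fun_prop) (fun y => ?_)
      exact (lt_max_of_lt_left (by linarith)).ne'
  · rcases le_or_gt t 0 with ht | ht
    · refine ⟨∅, Set.countable_empty, fun y _ => ?_⟩
      simp only [Fe, GyF, if_pos ht]
      exact hasDerivAt_const y 0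
    · refine ⟨{√(2 * t - 2 * ε), -√(2 * t - 2 * ε)}, (Set.toFinite _).countable, fun y hy => ?_⟩
      have hne : y ^ 2 + 2 * ε ≠ 2 * t := by
        intro h
        have h2 : √(2 * t - 2 * ε) = |y| := by
          rw [← Real.sqrt_sq_eq_abs]; congr 1; linarith
        apply hy
        rw [h2]
        rcases abs_choice y with h | h <;> simp [h]
      have hcont : Continuous fun y : ℝ => (y ^ 2 + 2 * ε) / 2 := by fun_prop
      rcases hne.lt_or_gt with h | h
      · have e : Fe ε ∘ (fun y => (y, t)) =ᶠ[nhds y] fun y => y := by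
          filter_upwards [hcont.continuousAt.eventually_lt continuousAt_const
            (by linarith : (y ^ 2 + 2 * ε) / 2 < t)] with x hx
          simp only [Function.comp, Fe, if_neg (not_le.2 ht), if_neg (not_le.2 hx)]
        have hG : GyF ε (y, t) = 1 := by
          simp only [GyF, if_neg (not_le.2 ht)]
          rw [if_neg (by linarith)]
        rw [hG]
        exact (hasDerivAt_id y).congr_of_eventuallyEq e
      · have e : Fe ε ∘ (fun y => (y, t)) =ᶠ[nhds y]
            fun y => 2 * y * t / (y ^ 2 + 2 * ε) := by
          filter_upwards [continuousAt_const.eventually_lt hcont.continuousAt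
            (by linarith : t < (y ^ 2 + 2 * ε) / 2)] with x hx
          simp only [Function.comp, Fe, if_neg (not_le.2 ht), if_pos hx.le]
        have hG : GyF ε (y, t) = 2 * t * (2 * ε - y ^ 2) / (y ^ 2 + 2 * ε) ^ 2 := by
          simp only [GyF, if_neg (not_le.2 ht)]
          rw [if_pos (by linarith)]
        rw [hG]
        have hD : y ^ 2 + 2 * ε ≠ 0 := by linarith
        have d1 : HasDerivAt (fun y : ℝ => 2 * y * t) (2 * 1 * t) y :=
          ((hasDerivAt_id y).const_mul 2).mul_const t
        have d2 : HasDerivAt (fun y : ℝ => y ^ 2 + 2 * ε) (2 * y) y := by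
          simpa using (hasDerivAt_pow 2 y).add_const (2 * ε)
        refine ((d1.div d2 hD).congr_deriv ?_).congr_of_eventuallyEq e
        congr 1
        ring
  · exact locallyIntegrable_of_abs_le_const
      ((measurable_GyF ε).comp (by fun_prop)) (fun y => abs_GyF_le hε _)

lemma isWeakDeriv_GtF {ε : ℝ} (hε : 0 ≤ ε) : IsWeakDeriv10 (0, 1) (Fe ε) (GtF ε) := by
  refine isWeakDeriv_snd (fun K hK => integrableOn_Fe hε hK) (fun K hK => integrableOn_GtF hε hK)
    (fun y => ?_) (fun y => ?_) (fun y => ?_)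
  · simp only [Fe_eq_clamp hε]
    fun_prop
  · refine ⟨{0, (y ^ 2 + 2 * ε) / 2}, (Set.toFinite _).countable, fun t hy => ?_⟩
    have h0 : t ≠ 0 := fun h => hy (by simp [h])
    have h1 : t ≠ (y ^ 2 + 2 * ε) / 2 := fun h => hy (by simp [h])
    rcases h0.lt_or_gt with ht | ht
    · have e : Fe ε ∘ (fun t => (y, t)) =ᶠ[nhds t] fun _ => 0 := by
        filter_upwards [eventually_lt_nhds ht] with x hx
        simp only [Function.comp, Fe, if_pos hx.le]
      have hG : GtF ε (y, t) = 0 := by simp only [GtF, if_pos ht.le]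
      rw [hG]
      exact (hasDerivAt_const t 0).congr_of_eventuallyEq e
    rcases h1.lt_or_gt with h | h
    · have e : Fe ε ∘ (fun t => (y, t)) =ᶠ[nhds t]
          fun t => 2 * y * t / (y ^ 2 + 2 * ε) := by
        filter_upwards [eventually_gt_nhds ht, eventually_lt_nhds h] with x hx hx'
        simp only [Function.comp, Fe, if_neg (not_le.2 hx), if_pos hx'.le]
      have hG : GtF ε (y, t) = 2 * y * 1 / (y ^ 2 + 2 * ε) := by
        simp only [GtF, if_neg (not_le.2 ht), if_pos h.le, mul_one]
      rw [hG]
      exact (((hasDerivAt_id t).const_mul (2 * y)).div_const _).congr_of_eventuallyEq e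
    · have e : Fe ε ∘ (fun t => (y, t)) =ᶠ[nhds t] fun _ => y := by
        filter_upwards [eventually_gt_nhds ht, eventually_gt_nhds h] with x hx hx'
        simp only [Function.comp, Fe, if_neg (not_le.2 hx), if_neg (not_le.2 hx')]
      have hG : GtF ε (y, t) = 0 := by
        simp only [GtF, if_neg (not_le.2 ht), if_neg (not_le.2 h)]
      rw [hG]
      exact (hasDerivAt_const t y).congr_of_eventuallyEq e
  · refine locallyIntegrable_of_abs_le_const (C := |2 * y / (y ^ 2 + 2 * ε)|)
      ((measurable_GtF ε).comp (by fun_prop)) (fun t => ?_)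
    simp only [GtF]
    split_ifs <;> simp

/-! ### Pointwise convergence and domination -/

/-- The regimes of the definition at `ε = 0` persist for small `ε > 0`; on the middle one it is
used that `t ≤ y ^ 2 / 2` is a non-strict inequality. -/
lemma tendsto_regimes {F : ℝ → ℝ × ℝ → ℝ} {A B : ℝ → ℝ → ℝ → ℝ} {C : ℝ → ℝ → ℝ}
    (hF : ∀ ε y t, F ε (y, t) = if t ≤ 0 then 0 else
      if t ≤ (y ^ 2 + 2 * ε) / 2 then A ε y t / B ε y t else C y t)
    (hA : ∀ y t, Continuous fun ε => A ε y t) (hB : ∀ y t, Continuous fun ε => B ε y t)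
    (hB0 : ∀ y t, y ≠ 0 → B 0 y t ≠ 0) (q : ℝ × ℝ) :
    Tendsto (fun ε => F ε q) (nhdsWithin 0 (Set.Ioi 0)) (nhds (F 0 q)) := by
  obtain ⟨y, t⟩ := q
  simp only [hF]
  by_cases ht : t ≤ 0
  · simp only [if_pos ht]; exact tendsto_const_nhds
  simp only [if_neg ht]
  push Not at ht
  by_cases h : t ≤ (y ^ 2 + 2 * 0) / 2
  · rw [if_pos h]
    have hy : y ≠ 0 := by rintro rfl; linarith
    have hc : ContinuousAt (fun ε => A ε y t / B ε y t) 0 :=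
      (hA y t).continuousAt.div (hB y t).continuousAt (hB0 y t hy)
    refine (hc.tendsto.mono_left nhdsWithin_le_nhds).congr' ?_
    filter_upwards [self_mem_nhdsWithin] with ε hε
    rw [if_pos (by have : (0 : ℝ) < ε := hε; linarith)]
  · rw [if_neg h]
    push Not at h
    refine tendsto_const_nhds.congr' ?_
    have hcont : Continuous fun ε : ℝ => (y ^ 2 + 2 * ε) / 2 := by fun_prop
    filter_upwards [nhdsWithin_le_nhds
      (hcont.continuousAt.eventually_lt continuousAt_const h)] with ε hε
    rw [if_neg (not_le.2 hε)]

lemma tendsto_Fe (q : ℝ × ℝ) :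
    Tendsto (fun ε => Fe ε q) (nhdsWithin 0 (Set.Ioi 0)) (nhds (Fe 0 q)) :=
  tendsto_regimes (A := fun _ y t => 2 * y * t) (B := fun ε y _ => y ^ 2 + 2 * ε)
    (C := fun y _ => y) (fun _ _ _ => rfl) (by fun_prop) (by fun_prop)
    (fun y t hy => by simpa using hy) q

lemma tendsto_GyF (q : ℝ × ℝ) :
    Tendsto (fun ε => GyF ε q) (nhdsWithin 0 (Set.Ioi 0)) (nhds (GyF 0 q)) :=
  tendsto_regimes (A := fun ε y t => 2 * t * (2 * ε - y ^ 2))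
    (B := fun ε y _ => (y ^ 2 + 2 * ε) ^ 2)
    (C := fun _ _ => 1) (fun _ _ _ => rfl) (by fun_prop) (by fun_prop)
    (fun y t hy => by simpa using hy) q

lemma tendsto_GtF (q : ℝ × ℝ) :
    Tendsto (fun ε => GtF ε q) (nhdsWithin 0 (Set.Ioi 0)) (nhds (GtF 0 q)) :=
  tendsto_regimes (A := fun _ y _ => 2 * y) (B := fun ε y _ => y ^ 2 + 2 * ε)
    (C := fun _ _ => 0) (fun _ _ _ => rfl) (by fun_prop) (by fun_prop)
    (fun y t hy => by simpa using hy) q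

lemma tendsto_integral_abs_sub_rpow {H : ℝ → ℝ × ℝ → ℝ} {B : ℝ × ℝ → ℝ} {p : ℝ} (hp : 0 < p)
    {K : Set (ℝ × ℝ)} (hm : ∀ ε, Measurable (H ε)) (hB : ∀ ε, 0 ≤ ε → ∀ q, |H ε q| ≤ B q)
    (hi : IntegrableOn (fun q => (2 * B q) ^ p) K)
    (ht : ∀ q, Tendsto (fun ε => H ε q) (nhdsWithin 0 (Set.Ioi 0)) (nhds (H 0 q))) :
    Tendsto (fun ε => ∫ q in K, |H ε q - H 0 q| ^ p) (nhdsWithin 0 (Set.Ioi 0)) (nhds 0) := by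
  have := tendsto_integral_filter_of_dominated_convergence (μ := volume.restrict K)
    (l := nhdsWithin (0 : ℝ) (Set.Ioi 0)) (F := fun ε q => |H ε q - H 0 q| ^ p)
    (f := fun _ => (0 : ℝ)) (fun q => (2 * B q) ^ p) ?_ ?_ hi ?_
  · simpa using this
  · refine Eventually.of_forall fun ε => Measurable.aestronglyMeasurable ?_
    have h1 := hm ε
    have h2 := hm 0
    simp_rw [← Real.norm_eq_abs]
    exact (h1.sub h2).norm.pow_const p
  · filter_upwards [self_mem_nhdsWithin] with ε hε
    refine Eventually.of_forall fun q => ?_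
    rw [Real.norm_eq_abs, abs_of_nonneg (by positivity)]
    refine Real.rpow_le_rpow (abs_nonneg _) ?_ hp.le
    have h1 := hB ε (le_of_lt hε) q
    have h2 := hB 0 le_rfl q
    have h3 := abs_sub (H ε q) (H 0 q)
    linarith
  · refine Eventually.of_forall fun q => ?_
    have h1 : Tendsto (fun ε => |H ε q - H 0 q|) (nhdsWithin 0 (Set.Ioi 0)) (nhds 0) := by
      simpa using ((ht q).sub_const (H 0 q)).abs
    have h2 := h1.rpow_const (p := p) (Or.inr hp.le)
    rwa [Real.zero_rpow hp.ne'] at h2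

theorem stmt_10 :
    (∀ ε : ℝ, 0 < ε → LocallyLipschitz (Fe ε)) ∧
    ∀ p : ℝ, 1 ≤ p → p < 3 →
      ∃ (Gy Gt : ℝ → ℝ × ℝ → ℝ) (gy gt : ℝ × ℝ → ℝ),
        (∀ ε : ℝ, 0 < ε →
          IsWeakDeriv10 (1, 0) (Fe ε) (Gy ε) ∧ IsWeakDeriv10 (0, 1) (Fe ε) (Gt ε)) ∧
        IsWeakDeriv10 (1, 0) (Fe 0) gy ∧ IsWeakDeriv10 (0, 1) (Fe 0) gt ∧
        ∀ K : Set (ℝ × ℝ), IsCompact K →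
          Tendsto (fun ε =>
              (∫ x in K, |Fe ε x - Fe 0 x| ^ p) + (∫ x in K, |Gy ε x - gy x| ^ p) +
                (∫ x in K, |Gt ε x - gt x| ^ p))
            (nhdsWithin 0 (Set.Ioi 0)) (nhds 0) := by
  refine ⟨fun ε hε => locallyLipschitz_Fe hε, fun p hp1 hp3 => ?_⟩
  have hp : 0 < p := by linarith
  refine ⟨GyF, GtF, GyF 0, GtF 0, fun ε hε => ⟨isWeakDeriv_GyF hε.le, isWeakDeriv_GtF hε.le⟩,
    isWeakDeriv_GyF le_rfl, isWeakDeriv_GtF le_rfl, fun K hK => ?_⟩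
  have t1 := tendsto_integral_abs_sub_rpow hp (K := K) measurable_Fe
    (fun ε hε q => abs_Fe_le hε q)
    (((by fun_prop : Continuous fun q : ℝ × ℝ => 2 * |q.1|).rpow_const
      (fun _ => Or.inr hp.le)).continuousOn.integrableOn_compact hK) tendsto_Fe
  have t2 := tendsto_integral_abs_sub_rpow hp (K := K) (B := fun _ => 1) measurable_GyF
    (fun ε hε q => abs_GyF_le hε q)
    (continuous_const.continuousOn.integrableOn_compact hK) tendsto_GyF
  -- The midpoint `b` of the interval `((1 - 1 / p) / 2, 1 / p)`, which is nonempty iff `p < 3`;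
  -- `b` in this interval means that `p * (2 * b - 1)` and `-(p * b)` both exceed `-1`.
  obtain ⟨b, hb⟩ : ∃ b : ℝ, b * p = (p + 1) / 4 := ⟨(p + 1) / 4 / p, by field_simp⟩
  have hb0 : 0 ≤ b := by
    by_contra h
    push Not at h
    nlinarith
  have hb1 : b ≤ 1 := by
    by_contra h
    push Not at h
    nlinarith
  have hi : IntegrableOn (fun q : ℝ × ℝ =>
      (2 * (2 * (|q.1| ^ (2 * b - 1) * |2 * q.2| ^ (-b)))) ^ p) K := by
    have h1 : -1 < (2 * b - 1) * p := by nlinarith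
    have h2 : -1 < -b * p := by nlinarith
    have := (integrableOn_rpow_mul_rpow h1 h2 hK).const_mul (4 ^ p)
    refine this.congr (Eventually.of_forall fun q => ?_)
    dsimp only
    rw [Real.rpow_mul (abs_nonneg _), Real.rpow_mul (abs_nonneg _),
      ← Real.mul_rpow (by positivity) (by positivity),
      ← Real.mul_rpow (by positivity) (by positivity)]
    congr 1
    ring
  have t3 := tendsto_integral_abs_sub_rpow hp (K := K) measurable_GtF
    (fun ε hε q => abs_GtF_le hε hb0 hb1 q) hi tendsto_GtF
  simpa using (t1.add t2).add t3
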